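/- Let f : ℝⁿ → ℝⁿ be continuously differentiable, let M be a symmetric positive definite real n×n matrix, β > 0, and let S ⊆ ℝⁿ be a convex set such that (Df(z))ᵀ M + M (Df(z)) ≼ −2βM for all z ∈ S. If x, y : [0,∞) → ℝⁿ are differentiable with x′(t) = f(x(t)) and y′(t) = f(y(t)) for all t ≥ 0, and for every t ≥ 0 the segment joining x(t) and y(t) is contained in S, then ‖x(t) − y(t)‖_M ≤ e^{−βt} ‖x(0) − y(0)‖_M for all t ≥ 0. -/

import Mathlib

open Matrix

/-- The M-norm of a vector: `‖v‖_M = √(vᵀ M v)`. -/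
noncomputable def mnorm {n : ℕ} (M : Matrix (Fin n) (Fin n) ℝ) (v : Fin n → ℝ) : ℝ :=
  Real.sqrt (v ⬝ᵥ M.mulVec v)

/-- The Jacobian of `f` at `z`, as a matrix. -/
noncomputable def jac {n : ℕ} (f : (Fin n → ℝ) → (Fin n → ℝ)) (z : Fin n → ℝ) :
    Matrix (Fin n) (Fin n) ℝ :=
  LinearMap.toMatrix' (fderiv ℝ f z : (Fin n → ℝ) →ₗ[ℝ] (Fin n → ℝ))

/-- Loewner order: `A ≼ B` iff `B - A` is positive semidefinite. -/
def loewnerLE {n : ℕ} (A B : Matrix (Fin n) (Fin n) ℝ) : Prop := (B - A).PosSemidef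

/-!
Write `⟪v, w⟫ = vᵀ M w`. Testing the matrix inequality with `v = a - b` bounds `⟪v, Df(z) v⟫` by
`-β ⟪v, v⟫` at every `z` on the segment from `a` to `b`, and the mean value theorem along that
segment turns this into the one-sided Lipschitz estimate `⟪v, f a - f b⟫ ≤ -β ⟪v, v⟫`. Hence
`‖x - y‖²_M` has derivative at most `-2β ‖x - y‖²_M`, and Grönwall's inequality yields the decay.
-/

section Gronwall

open Set

theorem le_mul_exp_of_hasDerivWithinAt_right_le {u u' : ℝ → ℝ} {K a b : ℝ}
    (hu : ContinuousOn u (Icc a b))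
    (hu' : ∀ t ∈ Ico a b, HasDerivWithinAt u (u' t) (Ici t) t)
    (hbound : ∀ t ∈ Ico a b, u' t ≤ K * u t) :
    ∀ t ∈ Icc a b, u t ≤ u a * Real.exp (K * (t - a)) := by
  intro t ht
  rw [← gronwallBound_ε0]
  exact le_gronwallBound_of_liminf_deriv_right_le hu
    (fun s hs _ hr => (hu' s hs).liminf_right_slope_le hr) le_rfl
    (fun s hs => by simpa only [add_zero] using hbound s hs) t ht

end Gronwall

section Bilinear

open Set

variable {E F : Type*} [NormedAddCommGroup E] [NormedSpace ℝ E]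
  [NormedAddCommGroup F] [NormedSpace ℝ F]

theorem apply_image_sub_le_of_hasFDerivWithinAt_segment (L : F →L[ℝ] ℝ) {f : E → F}
    {f' : E → E →L[ℝ] F} {a b : E} {C : ℝ}
    (hf : ∀ z ∈ segment ℝ a b, HasFDerivWithinAt f (f' z) (segment ℝ a b) z)
    (hbound : ∀ z ∈ segment ℝ a b, L (f' z (b - a)) ≤ C) :
    L (f b - f a) ≤ C := by
  obtain ⟨z, hz, hmean⟩ := domain_mvt (f := L ∘ f) (f' := fun z => L.comp (f' z))
    (fun z hz => L.hasFDerivAt.comp_hasFDerivWithinAt z (hf z hz))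
    (convex_segment a b) (left_mem_segment ℝ a b) (right_mem_segment ℝ a b)
  calc
    L (f b - f a) = L (f' z (b - a)) := by
      simpa only [map_sub, Function.comp_apply, ContinuousLinearMap.comp_apply] using hmean
    _ ≤ C := hbound z hz

variable (B : E →L[ℝ] E →L[ℝ] ℝ)

theorem hasDerivWithinAt_bilin_self (hB : ∀ v w, B v w = B w v) {u : ℝ → E} {u' : E}
    {s : Set ℝ} {t : ℝ} (hu : HasDerivWithinAt u u' s t) :
    HasDerivWithinAt (fun τ => B (u τ) (u τ)) (2 * B (u t) u') s t := by
  refine (B.hasDerivWithinAt_of_bilinear hu hu).congr_deriv ?_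
  rw [hB u' (u t), two_mul]

theorem bilin_self_le_mul_exp (hB : ∀ v w, B v w = B w v) {u u' : ℝ → E} {c a b : ℝ}
    (hu : ContinuousOn u (Icc a b))
    (hu' : ∀ t ∈ Ico a b, HasDerivWithinAt u (u' t) (Ici t) t)
    (hbound : ∀ t ∈ Ico a b, B (u t) (u' t) ≤ c * B (u t) (u t)) :
    ∀ t ∈ Icc a b, B (u t) (u t) ≤ B (u a) (u a) * Real.exp (2 * c * (t - a)) :=
  le_mul_exp_of_hasDerivWithinAt_right_le (by fun_prop)
    (fun t ht => hasDerivWithinAt_bilin_self B hB (hu' t ht))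
    (fun t ht => by linarith [hbound t ht])

end Bilinear

section MatrixForm

variable {ι : Type*} [Fintype ι]

theorem dotProduct_mulVec_comm_of_isSymm {R : Type*} [CommSemiring R] {M : Matrix ι ι R}
    (hM : M.IsSymm) (v w : ι → R) : v ⬝ᵥ M *ᵥ w = w ⬝ᵥ M *ᵥ v := by
  rw [← dotProduct_transpose_mulVec, hM.eq]

theorem dotProduct_transpose_mul_add_mul_mulVec {R : Type*} [CommSemiring R] {M : Matrix ι ι R}
    (hM : M.IsSymm) (J : Matrix ι ι R) (v : ι → R) :
    v ⬝ᵥ (Jᵀ * M + M * J) *ᵥ v = 2 * (v ⬝ᵥ M *ᵥ (J *ᵥ v)) := by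
  have htranspose : v ⬝ᵥ (Jᵀ * M) *ᵥ v = v ⬝ᵥ M *ᵥ (J *ᵥ v) := by
    rw [← mulVec_mulVec, dotProduct_transpose_mulVec, dotProduct_comm,
      dotProduct_mulVec_comm_of_isSymm hM]
  rw [add_mulVec, dotProduct_add, htranspose, ← mulVec_mulVec, two_mul]

/-- The bilinear form `(v, w) ↦ vᵀ M w` of a real matrix, as a continuous bilinear map, so that the
calculus of continuous bilinear maps applies to the `M`-norm. -/
noncomputable def matrixForm [DecidableEq ι] (M : Matrix ι ι ℝ) :
    (ι → ℝ) →L[ℝ] (ι → ℝ) →L[ℝ] ℝ :=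
  (Matrix.toBilin' M).toContinuousBilinearMap

theorem matrixForm_apply [DecidableEq ι] (M : Matrix ι ι ℝ) (v w : ι → ℝ) :
    matrixForm M v w = v ⬝ᵥ M *ᵥ w :=
  M.toBilin'_apply' v w

theorem matrixForm_comm [DecidableEq ι] {M : Matrix ι ι ℝ} (hM : M.IsSymm) (v w : ι → ℝ) :
    matrixForm M v w = matrixForm M w v := by
  simpa only [matrixForm_apply] using dotProduct_mulVec_comm_of_isSymm hM v w

end MatrixForm

section Contraction

/-- `S` is a contraction region with rate `β` for `ẋ = f x` in the constant metric `M`: the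
differential inequality that makes trajectories approach each other. The sign of `β` is left free,
so `β < 0` bounds the rate of expansion. Where `f` is not differentiable, `jac f` has the junk
value `0`. -/
def IsContractionRegion {n : ℕ} (f : (Fin n → ℝ) → (Fin n → ℝ)) (M : Matrix (Fin n) (Fin n) ℝ)
    (β : ℝ) (S : Set (Fin n → ℝ)) : Prop :=
  ∀ z ∈ S, loewnerLE ((jac f z)ᵀ * M + M * jac f z) ((-(2 * β)) • M)

variable {n : ℕ} {A B M : Matrix (Fin n) (Fin n) ℝ}

theorem dotProduct_mulVec_le_of_loewnerLE (h : loewnerLE A B) (v : Fin n → ℝ) :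
    v ⬝ᵥ A *ᵥ v ≤ v ⬝ᵥ B *ᵥ v := by
  simpa only [star_trivial, sub_mulVec, dotProduct_sub, sub_nonneg] using
    h.dotProduct_mulVec_nonneg v

theorem mnorm_le_mul_mnorm {v w : Fin n → ℝ} {c : ℝ} (hc : 0 ≤ c)
    (h : v ⬝ᵥ M *ᵥ v ≤ c ^ 2 * (w ⬝ᵥ M *ᵥ w)) : mnorm M v ≤ c * mnorm M w :=
  calc mnorm M v ≤ √(c ^ 2 * (w ⬝ᵥ M *ᵥ w)) := Real.sqrt_le_sqrt h
    _ = c * mnorm M w := by rw [Real.sqrt_mul (sq_nonneg c), Real.sqrt_sq hc, mnorm]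

theorem jac_mulVec (f : (Fin n → ℝ) → (Fin n → ℝ)) (z v : Fin n → ℝ) :
    jac f z *ᵥ v = fderiv ℝ f z v :=
  LinearMap.toMatrix'_mulVec _ v

theorem matrixForm_fderiv_le {f : (Fin n → ℝ) → (Fin n → ℝ)} {z : Fin n → ℝ} {β : ℝ}
    (hM : M.IsSymm) (h : loewnerLE ((jac f z)ᵀ * M + M * jac f z) ((-(2 * β)) • M))
    (v : Fin n → ℝ) : matrixForm M v (fderiv ℝ f z v) ≤ -β * matrixForm M v v := by
  have hquad := dotProduct_mulVec_le_of_loewnerLE h v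
  rw [dotProduct_transpose_mul_add_mul_mulVec hM, jac_mulVec, smul_mulVec, dotProduct_smul,
    smul_eq_mul] at hquad
  rw [matrixForm_apply, matrixForm_apply]
  linarith

theorem IsContractionRegion.matrixForm_sub_image_sub_le {f : (Fin n → ℝ) → (Fin n → ℝ)} {β : ℝ}
    {S : Set (Fin n → ℝ)} (hS : IsContractionRegion f M β S) (hM : M.IsSymm)
    (hf : ∀ z ∈ S, DifferentiableAt ℝ f z) {a b : Fin n → ℝ} (hab : segment ℝ a b ⊆ S) :
    matrixForm M (a - b) (f a - f b) ≤ -β * matrixForm M (a - b) (a - b) := by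
  rw [segment_symm] at hab
  exact apply_image_sub_le_of_hasFDerivWithinAt_segment (matrixForm M (a - b))
    (fun z hz => (hf z (hab hz)).hasFDerivAt.hasFDerivWithinAt)
    (fun z hz => matrixForm_fderiv_le hM (hS z (hab hz)) (a - b))

end Contraction

theorem stmt1_general {n : ℕ} {f : (Fin n → ℝ) → (Fin n → ℝ)} {M : Matrix (Fin n) (Fin n) ℝ}
    (hM : M.PosSemidef) {β : ℝ} {S : Set (Fin n → ℝ)} (hf : ∀ z ∈ S, DifferentiableAt ℝ f z)
    (hS : IsContractionRegion f M β S) {x y : ℝ → Fin n → ℝ}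
    (hx : ∀ t : ℝ, 0 ≤ t → HasDerivWithinAt x (f (x t)) (Set.Ici 0) t)
    (hy : ∀ t : ℝ, 0 ≤ t → HasDerivWithinAt y (f (y t)) (Set.Ici 0) t)
    (hseg : ∀ t : ℝ, 0 ≤ t → segment ℝ (x t) (y t) ⊆ S) :
    ∀ t : ℝ, 0 ≤ t →
      mnorm M (x t - y t) ≤ Real.exp (-β * t) * mnorm M (x 0 - y 0) := by
  intro t ht
  have hsymm : M.IsSymm := isHermitian_iff_isSymm.1 hM.isHermitian
  have hderiv : ∀ s : ℝ, 0 ≤ s →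
      HasDerivWithinAt (fun τ => x τ - y τ) (f (x s) - f (y s)) (Set.Ici 0) s :=
    fun s hs => (hx s hs).sub (hy s hs)
  have hdecay := bilin_self_le_mul_exp (matrixForm M) (matrixForm_comm hsymm)
    (fun s hs => (hderiv s hs.1).continuousWithinAt.mono Set.Icc_subset_Ici_self)
    (fun s hs => (hderiv s hs.1).mono (Set.Ici_subset_Ici.2 hs.1))
    (fun s hs => hS.matrixForm_sub_image_sub_le hsymm hf (hseg s hs.1))
    t (Set.right_mem_Icc.2 ht)
  have hexp : Real.exp (2 * -β * (t - 0)) = Real.exp (-β * t) ^ 2 := by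
    rw [← Real.exp_nat_mul, Nat.cast_two, sub_zero, mul_assoc]
  rw [hexp, mul_comm, matrixForm_apply, matrixForm_apply] at hdecay
  exact mnorm_le_mul_mnorm (Real.exp_pos _).le hdecay

theorem stmt1 {n : ℕ} (f : (Fin n → ℝ) → (Fin n → ℝ)) (hf : ContDiff ℝ 1 f)
    (M : Matrix (Fin n) (Fin n) ℝ) (hMsymm : M.IsSymm) (hMpd : M.PosDef)
    (β : ℝ) (hβ : 0 < β)
    (S : Set (Fin n → ℝ)) (hS : Convex ℝ S)
    (hcontract : ∀ z ∈ S,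
      loewnerLE ((jac f z)ᵀ * M + M * jac f z) ((-(2 * β)) • M))
    (x y : ℝ → Fin n → ℝ)
    (hx : ∀ t : ℝ, 0 ≤ t → HasDerivAt x (f (x t)) t)
    (hy : ∀ t : ℝ, 0 ≤ t → HasDerivAt y (f (y t)) t)
    (hseg : ∀ t : ℝ, 0 ≤ t → segment ℝ (x t) (y t) ⊆ S) :
    ∀ t : ℝ, 0 ≤ t →
      mnorm M (x t - y t) ≤ Real.exp (-β * t) * mnorm M (x 0 - y 0) :=
  stmt1_general hMpd.posSemidef (fun z _ => hf.differentiable one_ne_zero z) hcontract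
    (fun t ht => (hx t ht).hasDerivWithinAt) (fun t ht => (hy t ht).hasDerivWithinAt) hseg
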